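/- arXiv:1809.05460 — 2 statements merged into one kernel-verified Lean document; each statement's English description precedes it below -/
import Mathlib

section
/- Let G ⊆ UT(n,ℝ) be a real unipotent group and H ⊆ G a real algebraic subgroup. If g₁, g₂ ∈ G are such that μ(G)·g₁·H^♯ ∩ μ(G)·g₂·H^♯ ≠ ∅, then g₁H = g₂H. -/
open Pointwise Filter

noncomputable section

/-- Square matrices of size `n` over `R`. -/
abbrev Mat (n : ℕ) (R : Type) : Type := Matrix (Fin n) (Fin n) R

/-- The set `UT(n,ℝ)` of upper triangular matrices with `1`s on the diagonal. -/
def UTset (n : ℕ) : Set (Mat n ℝ) :=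
  {A | (∀ i, A i i = 1) ∧ ∀ i j : Fin n, (j : ℕ) < (i : ℕ) → A i j = 0}

/-- The entries of a matrix, as a point of `ℝ^(n²)`. -/
def matEval {n : ℕ} (A : Mat n ℝ) : Fin n × Fin n → ℝ := fun ij => A ij.1 ij.2

/-- A real unipotent group: a subgroup of `UT(n,ℝ)` which is the common zero set in
`UT(n,ℝ)` of a family of real polynomials in the matrix entries. -/
def IsRealUnipotentGroup (n : ℕ) (G : Set (Mat n ℝ)) : Prop :=
  (∃ S : Set (MvPolynomial (Fin n × Fin n) ℝ),
      G = {A | A ∈ UTset n ∧ ∀ p ∈ S, MvPolynomial.eval (matEval A) p = 0}) ∧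
    (1 : Mat n ℝ) ∈ G ∧ (∀ a ∈ G, ∀ b ∈ G, a * b ∈ G) ∧ ∀ a ∈ G, a⁻¹ ∈ G

/-- A real algebraic subgroup of a real unipotent group `G`. -/
def IsRealAlgSubgroup (n : ℕ) (G H : Set (Mat n ℝ)) : Prop :=
  H ⊆ G ∧ IsRealUnipotentGroup n H

/-- `N` is a normal subgroup-set of `G`. -/
def IsNormalIn (n : ℕ) (G N : Set (Mat n ℝ)) : Prop :=
  ∀ g ∈ G, ∀ x ∈ N, g * x * g⁻¹ ∈ N

/-- `Γ` is a lattice in `G`: a discrete subgroup which is cocompact, i.e. there is a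
compact `K ⊆ G` with `K·Γ = G` (equivalently, `G/Γ` is compact). -/
def IsLatticeIn (n : ℕ) (G Γ : Set (Mat n ℝ)) : Prop :=
  Γ ⊆ G ∧ (1 : Mat n ℝ) ∈ Γ ∧ (∀ a ∈ Γ, ∀ b ∈ Γ, a * b ∈ Γ) ∧ (∀ a ∈ Γ, a⁻¹ ∈ Γ) ∧
    DiscreteTopology ↥Γ ∧
    ∃ K : Set (Mat n ℝ), K ⊆ G ∧ IsCompact K ∧ ∀ g ∈ G, ∃ k ∈ K, ∃ γ ∈ Γ, g = k * γ

/-- `H` is `Γ`-rational: `Γ ∩ H` is a lattice in `H`. -/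
def IsRationalFor (n : ℕ) (Γ H : Set (Mat n ℝ)) : Prop :=
  IsLatticeIn n H (Γ ∩ H)

/-- The hyperreal matrix represented by a sequence of real matrices. -/
def matOfSeq (n : ℕ) (u : ℕ → Mat n ℝ) : Mat n Hyperreal :=
  Matrix.of fun i j => Hyperreal.ofSeq fun k => u k i j

/-- The nonstandard extension `S^♯` of a set `S` of real matrices: hyperreal matrices
represented by sequences landing in `S` on a set of indices in the ultrafilter. -/
def matSharp (n : ℕ) (S : Set (Mat n ℝ)) : Set (Mat n Hyperreal) :=
  {A | ∃ u : ℕ → Mat n ℝ, (∀ᶠ k in hyperfilter ℕ, u k ∈ S) ∧ A = matOfSeq n u}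

/-- The canonical embedding of real matrices into hyperreal matrices. -/
def matCast {n : ℕ} (A : Mat n ℝ) : Mat n Hyperreal :=
  Matrix.of fun i j => (A i j : Hyperreal)

/-- `μ(G)`: elements of `G^♯` all of whose entries are infinitesimally close to the
corresponding entries of the identity matrix. -/
def muSet (n : ℕ) (G : Set (Mat n ℝ)) : Set (Mat n Hyperreal) :=
  {A | A ∈ matSharp n G ∧ ∀ i j, Hyperreal.Infinitesimal (A i j - (1 : Mat n Hyperreal) i j)}

/-- The coset `gH` is near `α`, i.e. `α ∈ μ(G)·g·H^♯`. -/
def NearCoset (n : ℕ) (G : Set (Mat n ℝ)) (g : Mat n ℝ) (H : Set (Mat n ℝ))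
    (α : Mat n Hyperreal) : Prop :=
  α ∈ muSet n G * ({matCast g} * matSharp n H)

/-- The set of standard parts of the finite elements of a set of hyperreal matrices. -/
def matStSet (n : ℕ) (A : Set (Mat n Hyperreal)) : Set (Mat n ℝ) :=
  {B | ∃ a ∈ A, ∀ i j, Hyperreal.IsSt (a i j) (B i j)}

/-- A polynomial map `ℝ^d → Mat n ℝ`. -/
def IsPolyMapVec (d n : ℕ) (F : (Fin d → ℝ) → Mat n ℝ) : Prop :=
  ∃ P : Fin n → Fin n → MvPolynomial (Fin d) ℝ,
    ∀ x i j, F x i j = MvPolynomial.eval x (P i j)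

/-- The inclusion `ℝ →+* ℝ*` as a ring homomorphism. -/
def realHyperRingHom : ℝ →+* Hyperreal where
  toFun r := (r : Hyperreal)
  map_one' := Hyperreal.coe_one
  map_mul' := Hyperreal.coe_mul
  map_zero' := Hyperreal.coe_zero
  map_add' := Hyperreal.coe_add

/-- A semialgebraic subset of matrix space: a finite union of sets defined by finitely
many polynomial equations and finitely many strict polynomial inequalities. -/
def IsSemialgebraic (n : ℕ) (S : Set (Mat n ℝ)) : Prop :=
  ∃ (k : ℕ) (P Q : Fin k → Finset (MvPolynomial (Fin n × Fin n) ℝ)),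
    S = ⋃ t : Fin k, {A | (∀ p ∈ P t, MvPolynomial.eval (matEval A) p = 0) ∧
      ∀ q ∈ Q t, 0 < MvPolynomial.eval (matEval A) q}

/-!
The argument is the nonstandard form of the following separation property of a topological group:
for a closed subgroup `H`, two distinct left cosets `g₁H` and `g₂H` have disjoint neighbourhoods of
the form `V g₁ H` and `V g₂ H`, with `V` a neighbourhood of `1`. Indeed `(a, b) ↦ g₁⁻¹ a⁻¹ b g₂` is
continuous and its value at `(1, 1)` lies outside the closed set `H`. Now `μ(G) ⊆ V^♯` for every
such `V`, and `♯` respects products and disjointness, so `μ(G) g₁ H^♯` and `μ(G) g₂ H^♯` are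
disjoint. A real algebraic subgroup of `UT(n,ℝ)` is closed in `GL(n,ℝ)`.
-/

open Topology

section Separation

theorem exists_nhds_one_disjoint_mul_leftCoset {Γ : Type*} [Group Γ] [TopologicalSpace Γ]
    [IsTopologicalGroup Γ] {H : Subgroup Γ} (hH : IsClosed (H : Set Γ)) {g₁ g₂ : Γ}
    (hne : ({g₁} : Set Γ) * H ≠ {g₂} * H) :
    ∃ V ∈ 𝓝 (1 : Γ), Disjoint (V * ({g₁} * (H : Set Γ))) (V * ({g₂} * (H : Set Γ))) := by
  have hg : g₁⁻¹ * g₂ ∉ H := by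
    rwa [← leftCoset_eq_iff, ← Set.singleton_smul, ← Set.singleton_smul]
  have hcont : Continuous fun p : Γ × Γ => g₁⁻¹ * p.1⁻¹ * p.2 * g₂ := by fun_prop
  have hnhds : (fun p : Γ × Γ => g₁⁻¹ * p.1⁻¹ * p.2 * g₂) ⁻¹' (H : Set Γ)ᶜ ∈ 𝓝 (1, 1) :=
    hcont.continuousAt.preimage_mem_nhds (hH.isOpen_compl.mem_nhds (by simpa using hg))
  rw [nhds_prod_eq, mem_prod_same_iff] at hnhds
  obtain ⟨V, hV, hVH⟩ := hnhds
  simp only [Set.singleton_mul]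
  refine ⟨V, hV, Set.disjoint_left.2 ?_⟩
  rintro _ ⟨a, ha, _, ⟨h, hh, rfl⟩, rfl⟩ ⟨b, hb, _, ⟨h', hh', rfl⟩, heq⟩
  have heq : b * (g₂ * h') = a * (g₁ * h) := heq
  have hquot : g₁⁻¹ * a⁻¹ * b * g₂ = h * h'⁻¹ := by
    rw [eq_mul_inv_iff_mul_eq]
    simp only [mul_assoc, heq, inv_mul_cancel_left]
  have hnotMem : g₁⁻¹ * a⁻¹ * b * g₂ ∉ H := hVH (Set.mk_mem_prod ha hb)
  exact hnotMem (hquot ▸ H.mul_mem hh (H.inv_mem hh'))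

theorem exists_nhds_one_disjoint_mul_image_leftCoset {M : Type*} [Monoid M] [TopologicalSpace M]
    [ContinuousMul M] [IsOpenUnits M] {H : Subgroup Mˣ} (hH : IsClosed (H : Set Mˣ)) {g₁ g₂ : Mˣ}
    (hne : {(g₁ : M)} * Units.val '' (H : Set Mˣ) ≠ {(g₂ : M)} * Units.val '' (H : Set Mˣ)) :
    ∃ V ∈ 𝓝 (1 : M), Disjoint (V * ({(g₁ : M)} * Units.val '' (H : Set Mˣ)))
      (V * ({(g₂ : M)} * Units.val '' (H : Set Mˣ))) := by
  have image_val_mul (S T : Set Mˣ) : Units.val '' (S * T) = Units.val '' S * Units.val '' T :=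
    Set.image_mul (Units.coeHom M)
  simp only [← Set.image_singleton (f := Units.val), ← image_val_mul] at hne ⊢
  obtain ⟨V, hV, hdisj⟩ :=
    exists_nhds_one_disjoint_mul_leftCoset hH fun h => hne (congrArg (Units.val '' ·) h)
  refine ⟨Units.val '' V, ?_, ?_⟩
  · exact IsOpenUnits.isOpenEmbedding_unitsVal.isOpenMap.image_mem_nhds hV
  · rwa [← image_val_mul, ← image_val_mul, Set.disjoint_image_iff Units.val_injective]

instance isOpenUnits_matrix {m K : Type*} [Fintype m] [DecidableEq m] [Field K]
    [TopologicalSpace K] [IsTopologicalRing K] [ContinuousInv₀ K] [T1Space K] :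
    IsOpenUnits (Matrix m m K) where
  isOpenEmbedding_unitsVal := by
    have hrange : Set.range (Units.val : (Matrix m m K)ˣ → Matrix m m K) = Matrix.det ⁻¹' {0}ᶜ :=
      Set.ext fun A => (Matrix.isUnit_iff_isUnit_det A).trans isUnit_iff_ne_zero
    refine ⟨Units.isEmbedding_val_mk' (f := Inv.inv) (fun A hA => ?_) fun A => ?_, ?_⟩
    · refine (continuousAt_matrix_inv A ?_).continuousWithinAt
      rw [Ring.inverse_eq_inv']
      exact continuousAt_inv₀ ((Matrix.isUnit_iff_isUnit_det A).1 hA).ne_zero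
    · exact (Matrix.coe_units_inv A).symm
    · rw [hrange]
      exact isOpen_compl_singleton.preimage continuous_id.matrix_det

end Separation

section NonstandardExtension

variable {n : ℕ}

theorem matOfSeq_mul (u v : ℕ → Mat n ℝ) :
    matOfSeq n (u * v) = matOfSeq n u * matOfSeq n v := by
  ext i j
  have hentry : (fun k => (u k * v k) i j) = ∑ l, (fun k => u k i l) * fun k => v k l j := by
    ext k
    simp only [Matrix.mul_apply, Finset.sum_apply, Pi.mul_apply]
  calc matOfSeq n (u * v) i j
      = Hyperreal.ofSeq (∑ l, (fun k => u k i l) * fun k => v k l j) :=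
        congrArg Hyperreal.ofSeq hentry
    _ = ∑ l, Hyperreal.ofSeq (fun k => u k i l) * Hyperreal.ofSeq (fun k => v k l j) :=
        map_sum (Germ.coeRingHom (hyperfilter ℕ : Filter ℕ)) _ _

theorem matOfSeq_inj {u v : ℕ → Mat n ℝ} :
    matOfSeq n u = matOfSeq n v ↔ u =ᶠ[hyperfilter ℕ] v := by
  simp only [← Matrix.ext_iff, EventuallyEq, eventually_all]
  exact forall₂_congr fun i j => Germ.coe_eq

theorem matSharp_mono {S T : Set (Mat n ℝ)} (hST : S ⊆ T) : matSharp n S ⊆ matSharp n T := by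
  rintro _ ⟨u, hu, rfl⟩
  exact ⟨u, hu.mono fun _ hk => hST hk, rfl⟩

theorem matCast_mem_matSharp {S : Set (Mat n ℝ)} {A : Mat n ℝ} (hA : A ∈ S) :
    matCast A ∈ matSharp n S :=
  ⟨fun _ => A, .of_forall fun _ => hA, rfl⟩

theorem matSharp_mul_subset (S T : Set (Mat n ℝ)) :
    matSharp n S * matSharp n T ⊆ matSharp n (S * T) := by
  rintro _ ⟨_, ⟨u, hu, rfl⟩, _, ⟨v, hv, rfl⟩, rfl⟩
  exact ⟨u * v, (hu.and hv).mono fun _ hk => Set.mul_mem_mul hk.1 hk.2, (matOfSeq_mul u v).symm⟩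

theorem disjoint_matSharp {S T : Set (Mat n ℝ)} (hST : Disjoint S T) :
    Disjoint (matSharp n S) (matSharp n T) := by
  refine Set.disjoint_left.2 ?_
  rintro _ ⟨u, hu, rfl⟩ ⟨v, hv, huv⟩
  obtain ⟨k, hukS, hvkT, huvk⟩ := (hu.and (hv.and (matOfSeq_inj.1 huv))).exists
  exact Set.disjoint_left.1 hST hukS (huvk ▸ hvkT)

theorem tendsto_one_of_matOfSeq_mem_muSet {G : Set (Mat n ℝ)} {u : ℕ → Mat n ℝ}
    (hu : matOfSeq n u ∈ muSet n G) : Tendsto u (hyperfilter ℕ) (𝓝 1) := by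
  have one_apply (i j : Fin n) :
      (1 : Mat n Hyperreal) i j = (((1 : Mat n ℝ) i j : ℝ) : Hyperreal) := by
    simp only [Matrix.one_apply, apply_ite ((↑) : ℝ → Hyperreal), Hyperreal.coe_one,
      Hyperreal.coe_zero]
  refine tendsto_pi_nhds.2 fun i => tendsto_pi_nhds.2 fun j => tendsto_sub_nhds_zero_iff.1 ?_
  refine (nhds_basis_Ioo_pos 0).tendsto_right_iff.2 fun δ hδ => ?_
  -- `Hyperreal.Infinitesimal x` unfolds to `∀ δ > 0, 0 - δ < x ∧ x < 0 + δ`.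
  obtain ⟨hlower, hupper⟩ := hu.2 i j δ hδ
  rw [one_apply] at hlower hupper
  exact (Hyperreal.ofSeq_lt_ofSeq.1 hlower).and (Hyperreal.ofSeq_lt_ofSeq.1 hupper)

theorem muSet_subset_matSharp (G : Set (Mat n ℝ)) {V : Set (Mat n ℝ)} (hV : V ∈ 𝓝 1) :
    muSet n G ⊆ matSharp n V := by
  intro A hA
  obtain ⟨u, -, rfl⟩ := hA.1
  exact ⟨u, tendsto_one_of_matOfSeq_mem_muSet hA hV, rfl⟩

theorem muSet_mul_leftCoset_subset_matSharp (G H : Set (Mat n ℝ)) (g : Mat n ℝ)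
    {V : Set (Mat n ℝ)} (hV : V ∈ 𝓝 1) :
    muSet n G * ({matCast g} * matSharp n H) ⊆ matSharp n (V * ({g} * H)) :=
  calc muSet n G * ({matCast g} * matSharp n H)
      ⊆ matSharp n V * (matSharp n {g} * matSharp n H) := by
        gcongr
        · exact muSet_subset_matSharp G hV
        · exact Set.singleton_subset_iff.2 (matCast_mem_matSharp rfl)
    _ ⊆ matSharp n V * matSharp n ({g} * H) := by
        gcongr
        exact matSharp_mul_subset _ _
    _ ⊆ matSharp n (V * ({g} * H)) := matSharp_mul_subset _ _

end NonstandardExtension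

section RealUnipotentGroup

variable {n : ℕ}

theorem isUnit_of_mem_UTset {A : Mat n ℝ} (hA : A ∈ UTset n) : IsUnit A := by
  have hdet : A.det = 1 := by
    rw [Matrix.det_of_isUpperTriangular fun i j hij => hA.2 i j hij]
    exact Finset.prod_eq_one fun i _ => hA.1 i
  exact (Matrix.isUnit_iff_isUnit_det A).2 (hdet ▸ isUnit_one)

theorem isClosed_UTset (n : ℕ) : IsClosed (UTset n) := by
  have hentry (i j : Fin n) (c : ℝ) : IsClosed {A : Mat n ℝ | A i j = c} :=
    isClosed_eq (continuous_id.matrix_elem i j) continuous_const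
  simp only [UTset, Set.ofPred_and, Set.ofPred_forall]
  exact (isClosed_iInter fun i => hentry i i 1).inter <|
    isClosed_iInter fun i => isClosed_iInter fun j => isClosed_iInter fun _ => hentry i j 0

theorem isClosed_setOf_forall_eval_eq_zero {σ R : Type*} [CommSemiring R] [TopologicalSpace R]
    [IsTopologicalSemiring R] [T1Space R] (S : Set (MvPolynomial σ R)) :
    IsClosed {x : σ → R | ∀ p ∈ S, MvPolynomial.eval x p = 0} := by
  simp only [Set.ofPred_forall]
  exact isClosed_biInter fun p _ =>
    isClosed_singleton.preimage (MvPolynomial.continuous_eval p)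

theorem continuous_matEval : Continuous (matEval : Mat n ℝ → Fin n × Fin n → ℝ) :=
  continuous_pi fun ij => continuous_id.matrix_elem ij.1 ij.2

namespace IsRealUnipotentGroup

variable {G : Set (Mat n ℝ)}

theorem isUnit_of_mem (hG : IsRealUnipotentGroup n G) {A : Mat n ℝ} (hA : A ∈ G) : IsUnit A := by
  obtain ⟨⟨S, rfl⟩, -⟩ := hG
  exact isUnit_of_mem_UTset hA.1

theorem isClosed (hG : IsRealUnipotentGroup n G) : IsClosed G := by
  obtain ⟨⟨S, rfl⟩, -⟩ := hG
  exact (isClosed_UTset n).inter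
    ((isClosed_setOf_forall_eval_eq_zero S).preimage continuous_matEval)

/-- A real unipotent group as a subgroup of the group `GL(n,ℝ)` of units of the matrix ring, which,
unlike the ring itself, is a topological group. -/
def toSubgroup (hG : IsRealUnipotentGroup n G) : Subgroup (Mat n ℝ)ˣ where
  carrier := Units.val ⁻¹' G
  one_mem' := hG.2.1
  mul_mem' ha hb := hG.2.2.1 _ ha _ hb
  inv_mem' {a} ha := by
    rw [Set.mem_preimage, Matrix.coe_units_inv]
    exact hG.2.2.2 _ ha

theorem isClosed_toSubgroup (hG : IsRealUnipotentGroup n G) :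
    IsClosed (hG.toSubgroup : Set (Mat n ℝ)ˣ) :=
  hG.isClosed.preimage Units.continuous_val

theorem image_val_toSubgroup (hG : IsRealUnipotentGroup n G) :
    Units.val '' (hG.toSubgroup : Set (Mat n ℝ)ˣ) = G :=
  Set.image_preimage_eq_of_subset fun _ hA => hG.isUnit_of_mem hA

end IsRealUnipotentGroup

end RealUnipotentGroup

theorem stmt6_general {n : ℕ} (G : Set (Mat n ℝ)) (H : Subgroup (Mat n ℝ)ˣ)
    (hH : IsClosed (H : Set (Mat n ℝ)ˣ)) (g₁ g₂ : (Mat n ℝ)ˣ)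
    (hmeet : ((muSet n G * ({matCast g₁.val} * matSharp n (Units.val '' (H : Set (Mat n ℝ)ˣ)))) ∩
      (muSet n G * ({matCast g₂.val} * matSharp n (Units.val '' (H : Set (Mat n ℝ)ˣ))))).Nonempty) :
    {g₁.val} * Units.val '' (H : Set (Mat n ℝ)ˣ) =
      {g₂.val} * Units.val '' (H : Set (Mat n ℝ)ˣ) := by
  by_contra hne
  obtain ⟨V, hV, hdisj⟩ := exists_nhds_one_disjoint_mul_image_leftCoset hH hne
  exact Set.not_disjoint_iff_nonempty_inter.2 hmeet <| (disjoint_matSharp hdisj).mono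
    (muSet_mul_leftCoset_subset_matSharp G _ _ hV) (muSet_mul_leftCoset_subset_matSharp G _ _ hV)

/-- distinct cosets of `H` have disjoint `μ(G)`-neighborhoods. -/
theorem stmt6 {n : ℕ} (G : Set (Mat n ℝ)) (hG : IsRealUnipotentGroup n G)
    (H : Set (Mat n ℝ)) (hH : IsRealAlgSubgroup n G H)
    (g₁ g₂ : Mat n ℝ) (hg₁ : g₁ ∈ G) (hg₂ : g₂ ∈ G)
    (hmeet : ((muSet n G * ({matCast g₁} * matSharp n H)) ∩
      (muSet n G * ({matCast g₂} * matSharp n H))).Nonempty) :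
    {g₁} * H = {g₂} * H := by
  rw [← hH.2.image_val_toSubgroup] at hmeet ⊢
  exact stmt6_general G _ hH.2.isClosed_toSubgroup (hG.isUnit_of_mem hg₁).unit
    (hG.isUnit_of_mem hg₂).unit hmeet
end
end

section
/- Let G ⊆ UT(n,ℝ) be a real unipotent group and let H be a real algebraic subgroup of G with H ≠ G. Then there exists a real algebraic subgroup N of G such that H ⊆ N, N ≠ G, and N is normal in G. -/
open Pointwise Filter

noncomputable section

/-!
Starting from `H`, pass repeatedly to the normalizer in `G`. Each normalizer is again Zariski
closed, because for fixed `x` the entries of `g * x * g⁻¹` and `g⁻¹ * x * g` are polynomials in the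
entries of a matrix `g` of determinant `1`. If `H` contains a term of the lower central series of
`G`, then its normalizer contains the preceding term, so by nilpotency the sequence reaches `G`
after finitely many steps; the last term different from `G` has normalizer `G`.

Nilpotency of `UT(n,ℝ)` comes from the identity `⁅g, h⁆ - 1 = (A * B - B * A) * (h * g)⁻¹` with
`A = g - 1` and `B = h - 1`: if the entries of `A` vanish below the `k`-th superdiagonal and those
of `B` below the `l`-th, then the entries of `⁅g, h⁆ - 1` vanish below the `(k + l)`-th.
-/

open Matrix Subgroup
open scoped commutatorElement

section Normalizer

variable {Γ : Type*} [Group Γ]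

theorem mem_normalizer_iff_conj_mem {H : Subgroup Γ} {g : Γ} :
    g ∈ normalizer (H : Set Γ) ↔ ∀ x ∈ H, g * x * g⁻¹ ∈ H ∧ g⁻¹ * x * g ∈ H := by
  constructor
  · exact fun hg x hx => ⟨(mem_normalizer_iff.1 hg x).1 hx, (mem_normalizer_iff''.1 hg x).1 hx⟩
  · refine fun hg => mem_normalizer_iff.2 fun x => ⟨fun hx => (hg x hx).1, fun hx => ?_⟩
    simpa only [mul_assoc, inv_mul_cancel_left, inv_mul_cancel, mul_one] using (hg _ hx).2

theorem lowerCentralSeries_le_normalizer {G H : Subgroup Γ} {k : ℕ} (hHG : H ≤ G)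
    (h : G.lowerCentralSeries (k + 1) ≤ H) :
    G.lowerCentralSeries k ≤ normalizer (H : Set Γ) :=
  le_normalizer_iff_commutator_le_right.2 ((commutator_mono le_rfl hHG).trans h)

theorem exists_normal_of_lowerCentralSeries_le {G : Subgroup Γ} {P : Subgroup Γ → Prop}
    (hP : ∀ K, P K → P (G ⊓ normalizer (K : Set Γ))) (k : ℕ) {H : Subgroup Γ} (hHG : H ≤ G)
    (hne : H ≠ G) (hH : P H) (hk : G.lowerCentralSeries k ≤ H) :
    ∃ N ≤ G, P N ∧ H ≤ N ∧ N ≠ G ∧ (N.subgroupOf G).Normal := by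
  induction k generalizing H with
  | zero => exact absurd (hHG.antisymm hk) hne
  | succ k ih =>
    by_cases hself : G ⊓ normalizer (H : Set Γ) = G
    · exact ⟨H, hHG, hH, le_rfl, hne,
        (normal_subgroupOf_iff_le_normalizer hHG).2 (inf_eq_left.1 hself)⟩
    · obtain ⟨N, hNG, hN, hle, hN'⟩ := ih inf_le_left hself (hP H hH)
        (le_inf (G.lowerCentralSeries_antitone k.zero_le)
          (lowerCentralSeries_le_normalizer hHG hk))
      exact ⟨N, hNG, hN, (le_inf hHG le_normalizer).trans hle, hN'⟩

end Normalizer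

section ZariskiClosed

variable {ι R : Type*} [Fintype ι] [DecidableEq ι] [CommRing R]

/-- Zariski closed subsets of `SL(ι, R)`: the common zero sets of families of polynomials in the
matrix entries. -/
def IsZariskiClosed (Z : Set (SpecialLinearGroup ι R)) : Prop :=
  ∃ S : Set (MvPolynomial (ι × ι) R),
    Z = {g | ∀ p ∈ S, MvPolynomial.eval (fun ij => g ij.1 ij.2) p = 0}

theorem IsZariskiClosed.iInter {κ : Sort*} {Z : κ → Set (SpecialLinearGroup ι R)}
    (hZ : ∀ t, IsZariskiClosed (Z t)) : IsZariskiClosed (⋂ t, Z t) := by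
  choose S hS using hZ
  refine ⟨⋃ t, S t, ?_⟩
  ext g
  simp only [hS, Set.mem_iInter, Set.mem_iUnion, Set.mem_ofPred_eq, forall_exists_index]
  exact forall_comm

theorem IsZariskiClosed.inter {Z W : Set (SpecialLinearGroup ι R)} (hZ : IsZariskiClosed Z)
    (hW : IsZariskiClosed W) : IsZariskiClosed (Z ∩ W) := by
  rw [Set.inter_eq_iInter]
  exact .iInter (Bool.forall_bool.2 ⟨hW, hZ⟩)

theorem IsZariskiClosed.preimage {Z : Set (SpecialLinearGroup ι R)} (hZ : IsZariskiClosed Z)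
    {φ : SpecialLinearGroup ι R → SpecialLinearGroup ι R}
    (P : Matrix ι ι (MvPolynomial (ι × ι) R))
    (hφ : ∀ g, (φ g : Matrix ι ι R) =
      (MvPolynomial.eval fun ij : ι × ι => g ij.1 ij.2).mapMatrix P) :
    IsZariskiClosed (φ ⁻¹' Z) := by
  obtain ⟨S, rfl⟩ := hZ
  refine ⟨MvPolynomial.bind₁ (fun ij => P ij.1 ij.2) '' S, ?_⟩
  ext g
  have heval (p : MvPolynomial (ι × ι) R) :
      MvPolynomial.eval (fun ij => g ij.1 ij.2) (MvPolynomial.bind₁ (fun ij => P ij.1 ij.2) p) =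
        MvPolynomial.eval (fun ij => φ g ij.1 ij.2) p := by
    rw [MvPolynomial.eval, MvPolynomial.eval₂Hom_bind₁, hφ]
    rfl
  simp only [Set.mem_preimage, Set.mem_ofPred_eq, Set.forall_mem_image, heval]

theorem IsZariskiClosed.preimage_conj {Z : Set (SpecialLinearGroup ι R)} (hZ : IsZariskiClosed Z)
    (x : SpecialLinearGroup ι R) : IsZariskiClosed ((fun g => g * x * g⁻¹) ⁻¹' Z) := by
  refine hZ.preimage (mvPolynomialX ι ι R * MvPolynomial.C.mapMatrix (x : Matrix ι ι R) *
    (mvPolynomialX ι ι R).adjugate) fun g => ?_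
  have hconst : (MvPolynomial.eval fun ij : ι × ι => g ij.1 ij.2).mapMatrix
      (MvPolynomial.C.mapMatrix (x : Matrix ι ι R)) = x := by
    ext i j
    exact MvPolynomial.eval_C (x i j)
  rw [map_mul, map_mul, RingHom.map_adjugate, hconst, mvPolynomialX_mapMatrix_eval]
  rfl

theorem IsZariskiClosed.preimage_inv {Z : Set (SpecialLinearGroup ι R)} (hZ : IsZariskiClosed Z) :
    IsZariskiClosed ((·⁻¹) ⁻¹' Z) := by
  refine hZ.preimage (mvPolynomialX ι ι R).adjugate fun g => ?_
  rw [RingHom.map_adjugate, mvPolynomialX_mapMatrix_eval]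
  rfl

/-- `H` is a relatively Zariski closed subgroup of `G`. -/
def IsZariskiClosedIn (G H : Subgroup (SpecialLinearGroup ι R)) : Prop :=
  ∃ Z, IsZariskiClosed Z ∧ (H : Set (SpecialLinearGroup ι R)) = ↑G ∩ Z

namespace IsZariskiClosedIn

variable {G H K : Subgroup (SpecialLinearGroup ι R)}

theorem le (h : IsZariskiClosedIn G H) : H ≤ G := by
  obtain ⟨Z, -, hZ⟩ := h
  exact SetLike.coe_subset_coe.1 (hZ ▸ Set.inter_subset_left)

theorem trans (hHG : IsZariskiClosedIn G H) (hGK : IsZariskiClosedIn K G) :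
    IsZariskiClosedIn K H := by
  obtain ⟨Z, hZ, hHZ⟩ := hHG
  obtain ⟨W, hW, hGW⟩ := hGK
  exact ⟨W ∩ Z, hW.inter hZ, by rw [hHZ, hGW, Set.inter_assoc]⟩

theorem of_le (hHK : IsZariskiClosedIn K H) (hHG : H ≤ G) (hGK : G ≤ K) :
    IsZariskiClosedIn G H := by
  obtain ⟨Z, hZ, hHZ⟩ := hHK
  refine ⟨Z, hZ, Set.Subset.antisymm (Set.subset_inter hHG (hHZ ▸ Set.inter_subset_right)) ?_⟩
  exact hHZ ▸ Set.inter_subset_inter_left Z hGK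

theorem inf_normalizer (h : IsZariskiClosedIn G H) :
    IsZariskiClosedIn G (G ⊓ normalizer (H : Set (SpecialLinearGroup ι R))) := by
  have hle := h.le
  obtain ⟨Z, hZ, hHZ⟩ := h
  have mem_H : ∀ {y}, y ∈ G → (y ∈ H ↔ y ∈ Z) := fun {y} hy => by
    rw [← SetLike.mem_coe, hHZ, Set.mem_inter_iff, SetLike.mem_coe, and_iff_right hy]
  refine ⟨⋂ x : H, (fun g => g * x * g⁻¹) ⁻¹' Z ∩ (·⁻¹) ⁻¹' ((fun g => g * x * g⁻¹) ⁻¹' Z),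
    .iInter fun x => (hZ.preimage_conj x).inter (hZ.preimage_conj x).preimage_inv, ?_⟩
  ext g
  simp only [coe_inf, Set.mem_inter_iff, SetLike.mem_coe, mem_normalizer_iff_conj_mem,
    Set.mem_iInter, Subtype.forall, Set.mem_preimage, inv_inv]
  refine and_congr_right fun hg => forall₂_congr fun x hx => and_congr (mem_H ?_) (mem_H ?_)
  · exact mul_mem (mul_mem hg (hle hx)) (inv_mem hg)
  · exact mul_mem (mul_mem (inv_mem hg) (hle hx)) hg

end IsZariskiClosedIn

theorem stmt11_general {G H : Subgroup (SpecialLinearGroup ι R)} [Group.IsNilpotent G]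
    (hH : IsZariskiClosedIn G H) (hne : H ≠ G) :
    ∃ N, IsZariskiClosedIn G N ∧ H ≤ N ∧ N ≠ G ∧ (N.subgroupOf G).Normal := by
  obtain ⟨k, hk⟩ := G.isNilpotent_iff_lowerCentralSeries.1 ‹_›
  obtain ⟨N, -, hN⟩ := exists_normal_of_lowerCentralSeries_le
    (fun _ => IsZariskiClosedIn.inf_normalizer) k hH.le hne hH (hk ▸ bot_le)
  exact ⟨N, hN⟩

end ZariskiClosed

section MatrixFiltration

variable {ι R : Type*} [Ring R] (b : ι → ℕ) (k l : ℕ)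

variable (R) in
/-- The filtration of matrices attached to a grading `b` of the index set: `A` lies in the `k`-th
step if `A i j = 0` unless `b i + k ≤ b j`. For `k = 0` these are the matrices that are block
triangular with respect to `b`. -/
def matrixFiltration : AddSubgroup (Matrix ι ι R) where
  carrier := {A | ∀ i j, b j < b i + k → A i j = 0}
  zero_mem' _ _ _ := rfl
  add_mem' hA hB i j hij := by rw [Matrix.add_apply, hA i j hij, hB i j hij, add_zero]
  neg_mem' hA i j hij := by rw [Matrix.neg_apply, hA i j hij, neg_zero]

variable {b k l}

theorem matrixFiltration_antitone : Antitone (matrixFiltration R b) :=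
  fun _ _ hkl _ hA i j hij => hA i j (by omega)

theorem one_mem_matrixFiltration_zero [DecidableEq ι] :
    (1 : Matrix ι ι R) ∈ matrixFiltration R b 0 :=
  blockTriangular_one

theorem mul_mem_matrixFiltration [Fintype ι] {A B : Matrix ι ι R}
    (hA : A ∈ matrixFiltration R b k) (hB : B ∈ matrixFiltration R b l) :
    A * B ∈ matrixFiltration R b (k + l) := by
  intro i j hij
  rw [Matrix.mul_apply]
  refine Finset.sum_eq_zero fun m _ => ?_
  by_cases him : b m < b i + k
  · rw [hA i m him, zero_mul]
  · rw [hB m j (by omega), mul_zero]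

theorem mem_matrixFiltration_zero_of_sub_one_mem [DecidableEq ι] {A : Matrix ι ι R}
    (hA : A - 1 ∈ matrixFiltration R b k) : A ∈ matrixFiltration R b 0 :=
  sub_add_cancel A 1 ▸
    add_mem (matrixFiltration_antitone k.zero_le hA) one_mem_matrixFiltration_zero

end MatrixFiltration

section ParabolicFiltration

variable {ι R : Type*} [Fintype ι] [DecidableEq ι] [CommRing R] {b : ι → ℕ} {k l : ℕ}

theorem coe_inv_eq_inv_coe (g : SpecialLinearGroup ι R) :
    (↑g⁻¹ : Matrix ι ι R) = (g : Matrix ι ι R)⁻¹ := by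
  simp [Matrix.inv_def]

theorem coe_inv_mem_matrixFiltration_zero {g : SpecialLinearGroup ι R}
    (hg : (g : Matrix ι ι R) ∈ matrixFiltration R b 0) :
    (↑g⁻¹ : Matrix ι ι R) ∈ matrixFiltration R b 0 := by
  have hdet : IsUnit (g : Matrix ι ι R).det := by simp
  have := (g : Matrix ι ι R).invertibleOfIsUnitDet hdet
  rw [coe_inv_eq_inv_coe]
  exact blockTriangular_inv_of_blockTriangular (b := b) hg

variable (R b k) in
/-- The descending filtration `k ↦ {g | g - 1 ∈ matrixFiltration R b k}` of the parabolic subgroup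
of `SL(ι, R)` attached to a grading `b` of the index set (the term `k = 0`). The term `k = 1` is its
unipotent radical. -/
def parabolicFiltration : Subgroup (SpecialLinearGroup ι R) where
  carrier := {g | (g : Matrix ι ι R) - 1 ∈ matrixFiltration R b k}
  one_mem' := by simp
  mul_mem' {g h} hg hh := by
    have hgh : (g * h : Matrix ι ι R) - 1 = (g - 1) * h + (h - 1) := by noncomm_ring
    change (g * h : Matrix ι ι R) - 1 ∈ matrixFiltration R b k
    rw [hgh]
    exact add_mem (mul_mem_matrixFiltration hg (mem_matrixFiltration_zero_of_sub_one_mem hh)) hh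
  inv_mem' {g} hg := by
    have hinv : (g : Matrix ι ι R) * (↑g⁻¹ : Matrix ι ι R) = 1 :=
      congrArg Subtype.val (mul_inv_cancel g)
    have hginv : (↑g⁻¹ : Matrix ι ι R) - 1 = -((g - 1 : Matrix ι ι R) * (↑g⁻¹ : Matrix ι ι R)) := by
      rw [sub_mul, hinv, one_mul, neg_sub]
    change (↑g⁻¹ : Matrix ι ι R) - 1 ∈ matrixFiltration R b k
    rw [hginv]
    exact neg_mem (mul_mem_matrixFiltration hg
      (coe_inv_mem_matrixFiltration_zero (mem_matrixFiltration_zero_of_sub_one_mem hg)))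

theorem coe_commutator_sub_one (g h : SpecialLinearGroup ι R) :
    (↑⁅g, h⁆ : Matrix ι ι R) - 1 =
      ((g - 1) * (h - 1) - (h - 1) * (g - 1) : Matrix ι ι R) * (↑(h * g)⁻¹ : Matrix ι ι R) := by
  have hcomm : (↑⁅g, h⁆ : Matrix ι ι R) = (g * h : Matrix ι ι R) * (↑(h * g)⁻¹ : Matrix ι ι R) :=
    congrArg Subtype.val (show ⁅g, h⁆ = g * h * (h * g)⁻¹ by group)
  have hone : (1 : Matrix ι ι R) = (h * g : Matrix ι ι R) * (↑(h * g)⁻¹ : Matrix ι ι R) :=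
    congrArg Subtype.val (mul_inv_cancel (h * g)).symm
  calc (↑⁅g, h⁆ : Matrix ι ι R) - 1
      = (g * h - h * g : Matrix ι ι R) * (↑(h * g)⁻¹ : Matrix ι ι R) := by
        rw [sub_mul, ← hcomm, ← hone]
    _ = _ := by congr 1; noncomm_ring

theorem commutator_parabolicFiltration_le :
    ⁅parabolicFiltration R b k, parabolicFiltration R b l⁆ ≤ parabolicFiltration R b (k + l) := by
  refine commutator_le.2 fun g hg h hh => ?_
  have hgh := mul_mem_matrixFiltration hg hh
  have hhg : ((h - 1) * (g - 1) : Matrix ι ι R) ∈ matrixFiltration R b (k + l) :=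
    add_comm l k ▸ mul_mem_matrixFiltration hh hg
  have hsub := sub_mem hgh hhg
  have hinv : (↑(h * g)⁻¹ : Matrix ι ι R) ∈ matrixFiltration R b 0 :=
    coe_inv_mem_matrixFiltration_zero (mul_mem_matrixFiltration
      (mem_matrixFiltration_zero_of_sub_one_mem hh) (mem_matrixFiltration_zero_of_sub_one_mem hg))
  change (↑⁅g, h⁆ : Matrix ι ι R) - 1 ∈ matrixFiltration R b (k + l)
  rw [coe_commutator_sub_one]
  exact (mul_mem_matrixFiltration hsub hinv :)

theorem parabolicFiltration_eq_bot (hk : ∀ i j, b j < b i + k) :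
    parabolicFiltration R b k = ⊥ := by
  refine (eq_bot_iff_forall _).2 fun g hg => Subtype.ext (sub_eq_zero.1 ?_)
  ext i j
  exact hg i j (hk i j)

theorem lowerCentralSeries_le_parabolicFiltration {G : Subgroup (SpecialLinearGroup ι R)}
    (hG : G ≤ parabolicFiltration R b 1) (k : ℕ) :
    G.lowerCentralSeries k ≤ parabolicFiltration R b (k + 1) := by
  induction k with
  | zero => exact hG
  | succ k ih => exact (commutator_mono ih hG).trans commutator_parabolicFiltration_le

theorem isNilpotent_of_le_parabolicFiltration {G : Subgroup (SpecialLinearGroup ι R)}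
    (hG : G ≤ parabolicFiltration R b 1) : Group.IsNilpotent G := by
  refine G.isNilpotent_iff_lowerCentralSeries.2 ⟨Finset.univ.sup b, le_bot_iff.1 ?_⟩
  refine (lowerCentralSeries_le_parabolicFiltration hG _).trans_eq
    (parabolicFiltration_eq_bot fun i j => ?_)
  have : b j ≤ Finset.univ.sup b := Finset.le_sup (Finset.mem_univ j)
  omega

end ParabolicFiltration

section MatrixSet

variable {ι R : Type*} [Fintype ι] [DecidableEq ι] [CommRing R]

/-- The set of matrices underlying a subgroup of `SL(ι, R)`. -/
def matrixSet : Subgroup (SpecialLinearGroup ι R) ↪o Set (Matrix ι ι R) :=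
  .ofMapLEIff (fun K => Subtype.val '' (K : Set (SpecialLinearGroup ι R))) fun _ _ =>
    Set.image_subset_image_iff Subtype.val_injective

theorem coe_mem_matrixSet {K : Subgroup (SpecialLinearGroup ι R)} {g : SpecialLinearGroup ι R} :
    (g : Matrix ι ι R) ∈ matrixSet K ↔ g ∈ K :=
  Subtype.val_injective.mem_set_image

end MatrixSet

section Unitriangular

variable {n : ℕ}

theorem mem_UTset_iff {A : Mat n ℝ} : A ∈ UTset n ↔ A - 1 ∈ matrixFiltration ℝ Fin.val 1 := by
  constructor
  · rintro ⟨hdiag, hlower⟩ i j hij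
    rcases (Nat.lt_succ_iff.1 hij).lt_or_eq with h | h
    · simp [hlower i j h, Matrix.one_apply_ne (Fin.ne_of_gt h)]
    · simp [Fin.ext h, hdiag]
  · intro hA
    refine ⟨fun i => ?_, fun i j hij => ?_⟩
    · simpa [sub_eq_zero] using hA i i (Nat.lt_succ_self _)
    · simpa [Matrix.one_apply_ne (Fin.ne_of_gt hij)] using hA i j (Nat.lt_succ_of_lt hij)

theorem det_eq_one_of_mem_UTset {A : Mat n ℝ} (hA : A ∈ UTset n) : A.det = 1 := by
  rw [det_of_isUpperTriangular fun i j => hA.2 i j]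
  exact Finset.prod_eq_one fun i _ => hA.1 i

variable (n) in
/-- The group `UT(n,ℝ)` as a subgroup of `SL(n,ℝ)`. -/
abbrev unitriangularSubgroup : Subgroup (SpecialLinearGroup (Fin n) ℝ) :=
  parabolicFiltration ℝ Fin.val 1

theorem matrixSet_eq_zeroLocus_iff {K : Subgroup (SpecialLinearGroup (Fin n) ℝ)}
    {S : Set (MvPolynomial (Fin n × Fin n) ℝ)} :
    matrixSet K = {A | A ∈ UTset n ∧ ∀ p ∈ S, MvPolynomial.eval (matEval A) p = 0} ↔
      (K : Set (SpecialLinearGroup (Fin n) ℝ)) =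
        (unitriangularSubgroup n : Set _) ∩ {g : SpecialLinearGroup (Fin n) ℝ |
          ∀ p ∈ S, MvPolynomial.eval (matEval g) p = 0} := by
  constructor
  · intro hK
    ext g
    exact coe_mem_matrixSet.symm.trans
      ((Set.ext_iff.1 hK g).trans (and_congr_left' mem_UTset_iff))
  · intro hK
    refine Set.Subset.antisymm ?_ fun A hA => ?_
    · rintro _ ⟨g, hg, rfl⟩
      exact (hK.subset hg).imp_left mem_UTset_iff.2
    · have hdet := det_eq_one_of_mem_UTset hA.1
      exact ⟨⟨A, hdet⟩, hK.superset (hA.imp_left mem_UTset_iff.1), rfl⟩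

theorem isRealUnipotentGroup_matrixSet {K : Subgroup (SpecialLinearGroup (Fin n) ℝ)}
    (hK : IsZariskiClosedIn (unitriangularSubgroup n) K) :
    IsRealUnipotentGroup n (matrixSet K) := by
  obtain ⟨_, ⟨S, rfl⟩, hS⟩ := hK
  refine ⟨⟨S, matrixSet_eq_zeroLocus_iff.2 hS⟩, coe_mem_matrixSet.2 (one_mem K), ?_, ?_⟩
  · rintro _ ⟨g, hg, rfl⟩ _ ⟨h, hh, rfl⟩
    exact coe_mem_matrixSet.2 (mul_mem hg hh)
  · rintro _ ⟨g, hg, rfl⟩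
    exact coe_inv_eq_inv_coe g ▸ coe_mem_matrixSet.2 (inv_mem hg)

theorem IsRealUnipotentGroup.exists_matrixSet_eq {G : Set (Mat n ℝ)}
    (hG : IsRealUnipotentGroup n G) :
    ∃ K, IsZariskiClosedIn (unitriangularSubgroup n) K ∧ matrixSet K = G := by
  obtain ⟨⟨S, hS⟩, hone, hmul, hinv⟩ := hG
  let K : Subgroup (SpecialLinearGroup (Fin n) ℝ) :=
    { carrier := {g | (g : Mat n ℝ) ∈ G}
      one_mem' := hone
      mul_mem' := fun {g h} hg hh => hmul g hg h hh
      inv_mem' := fun {g} hg => show (↑g⁻¹ : Mat n ℝ) ∈ G from coe_inv_eq_inv_coe g ▸ hinv g hg }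
  have hKG : matrixSet K = G := by
    refine Set.Subset.antisymm ?_ fun A hA => ?_
    · rintro _ ⟨g, hg, rfl⟩
      exact hg
    · exact ⟨⟨A, det_eq_one_of_mem_UTset (hS.subset hA).1⟩, hA, rfl⟩
  exact ⟨K, ⟨_, ⟨S, rfl⟩, matrixSet_eq_zeroLocus_iff.1 (hKG.trans hS)⟩, hKG⟩

theorem isRealAlgSubgroup_matrixSet_iff {G : Subgroup (SpecialLinearGroup (Fin n) ℝ)}
    (hG : IsZariskiClosedIn (unitriangularSubgroup n) G) {H : Set (Mat n ℝ)} :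
    IsRealAlgSubgroup n (matrixSet G) H ↔ ∃ K, IsZariskiClosedIn G K ∧ matrixSet K = H := by
  constructor
  · rintro ⟨hHG, hH⟩
    obtain ⟨K, hK, rfl⟩ := hH.exists_matrixSet_eq
    exact ⟨K, hK.of_le (matrixSet.le_iff_le.1 hHG) hG.le, rfl⟩
  · rintro ⟨K, hK, rfl⟩
    exact ⟨matrixSet.monotone hK.le, isRealUnipotentGroup_matrixSet (hK.trans hG)⟩

theorem isNormalIn_matrixSet {G N : Subgroup (SpecialLinearGroup (Fin n) ℝ)} (hNG : N ≤ G)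
    (hN : (N.subgroupOf G).Normal) : IsNormalIn n (matrixSet G) (matrixSet N) := by
  rintro _ ⟨g, hg, rfl⟩ _ ⟨x, hx, rfl⟩
  rw [← coe_inv_eq_inv_coe g]
  exact coe_mem_matrixSet.2 ((normal_subgroupOf_iff hNG).1 hN x g hx hg)

end Unitriangular

/-- a proper real algebraic subgroup is contained in a proper normal one. -/
theorem stmt11 {n : ℕ} (G : Set (Mat n ℝ)) (hG : IsRealUnipotentGroup n G)
    (H : Set (Mat n ℝ)) (hH : IsRealAlgSubgroup n G H) (hne : H ≠ G) :
    ∃ N : Set (Mat n ℝ), IsRealAlgSubgroup n G N ∧ H ⊆ N ∧ N ≠ G ∧ IsNormalIn n G N := by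
  obtain ⟨G, hGU, rfl⟩ := hG.exists_matrixSet_eq
  obtain ⟨H, hHG, rfl⟩ := (isRealAlgSubgroup_matrixSet_iff hGU).1 hH
  have := isNilpotent_of_le_parabolicFiltration hGU.le
  obtain ⟨N, hNG, hHN, hne', hnormal⟩ := stmt11_general hHG (ne_of_apply_ne matrixSet hne)
  exact ⟨matrixSet N, (isRealAlgSubgroup_matrixSet_iff hGU).2 ⟨N, hNG, rfl⟩,
    matrixSet.monotone hHN, matrixSet.injective.ne hne', isNormalIn_matrixSet hNG.le hnormal⟩
end
end
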